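/- Let Γ be a distance-regular graph with classical parameters (D, b, α, β), D ≥ 4, and intersection numbers a₁ = 0 and a₂ ≠ 0. Suppose s t u z w is a pentagon in Γ, where s, u ∈ Γ₃(x) and z ∈ Γ₂(x) for some vertex x. Then every vertex r ∈ B(u,x) (i.e., every neighbor r of u with ∂(x,r) = 4) satisfies ∂(s,r) = 3. -/

import Mathlib

/-!
Common definitions: distance-regular graphs (via an intersection-number function `p`),
classical parameters, and the sets `B(x,y)`, `A(x,y)`, `C(x,y)`.
The distance `∂` is `SimpleGraph.dist`.
-/

variable {V : Type*}

/-- `Γ` is distance-regular with intersection numbers `p h i j = p^h_{ij}`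
(for indices up to the diameter `D`). -/
def SimpleGraph.IsDistRegularWith (G : SimpleGraph V) (D : ℕ) (p : ℕ → ℕ → ℕ → ℕ) : Prop :=
  ∀ h i j : ℕ, h ≤ D → i ≤ D → j ≤ D → ∀ x y : V, G.dist x y = h →
    {z : V | G.dist x z = i ∧ G.dist y z = j}.ncard = p h i j

/-- The Gaussian bracket `[i] = 1 + b + b² + ⋯ + b^{i-1}`. -/
def gaussBracket (b : ℝ) (i : ℕ) : ℝ := ∑ k ∈ Finset.range i, b ^ k

/-- A distance-regular graph with intersection numbers `p` has classical parameters
`(D, b, α, β)`: `b ∉ {0, -1}`, `c_i = [i](1 + α[i-1])` and `b_i = ([D]-[i])(β - α[i])`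
for `0 ≤ i ≤ D`, where `c_i = p^i_{1,i-1}` and `b_i = p^i_{1,i+1}`. -/
def HasClassicalParams (D : ℕ) (p : ℕ → ℕ → ℕ → ℕ) (b α β : ℝ) : Prop :=
  b ≠ 0 ∧ b ≠ -1 ∧
    (∀ i ≤ D, (p i 1 (i - 1) : ℝ) = gaussBracket b i * (1 + α * gaussBracket b (i - 1))) ∧
    (∀ i ≤ D, (p i 1 (i + 1) : ℝ) =
      (gaussBracket b D - gaussBracket b i) * (β - α * gaussBracket b i))

/-- `B(x,y) = Γ₁(x) ∩ Γ_{∂(x,y)+1}(y)`. -/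
def Bset (G : SimpleGraph V) (x y : V) : Set V :=
  {v | G.dist x v = 1 ∧ G.dist y v = G.dist x y + 1}

/-- `A(x,y) = Γ₁(x) ∩ Γ_{∂(x,y)}(y)`. -/
def Aset (G : SimpleGraph V) (x y : V) : Set V :=
  {v | G.dist x v = 1 ∧ G.dist y v = G.dist x y}

/-- `C(x,y) = Γ₁(x) ∩ Γ_{∂(x,y)-1}(y)`. -/
def Cset (G : SimpleGraph V) (x y : V) : Set V :=
  {v | G.dist x v = 1 ∧ G.dist y v = G.dist x y - 1}

/-!
A graph with classical parameters is `Q`-polynomial: the functions `w ↦ b⁻¹ ^ ∂(v,w)` are, up to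
scaling and constants, the rows of a primitive idempotent of the adjacency matrix `A`. The diagonal
matrix of such a function satisfies Terwilliger's tridiagonal relation with `A`. When `a₁ = 0`, the
`(y,z)` entry of that relation with `∂(y,z) = 2` is a balanced set identity for `A(z,y)` and
`A(y,z)`. Moreover `a₁ = 0`, `a₂ ≠ 0` and `D ≥ 4` force `b < 0`, and then the alternating signs in
the identity give `A(z,y) ⊆ A(z,v)` whenever such a `y` lies on a geodesic from `v` to `z`. In the
pentagon, `∂(s,r)` is at most `3` because `∂(s,u) = 2`, and inclusions of this kind rule out
smaller values.
-/

open Matrix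

section TridiagonalRelation

/-- The Askey–Wilson expression `A²X - β AXA + XA² - γ (AX + XA) - ρ X` in `A`, as a linear map
of `X`. -/
def askeyWilson {K R : Type*} [CommRing K] [Ring R] [Algebra K R] (β γ ρ : K) (A : R) :
    R →ₗ[K] R where
  toFun X := A * A * X - β • (A * X * A) + X * A * A - γ • (A * X + X * A) - ρ • X
  map_add' X Y := by
    simp only [mul_add, add_mul, smul_add]
    abel
  map_smul' c X := by
    simp only [mul_smul_comm, smul_mul_assoc, smul_add, smul_sub, smul_comm c, RingHom.id_apply]

/-- The commutator of `A` with its Askey–Wilson expression in `X`, as a linear map of `X`. Its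
vanishing is Terwilliger's tridiagonal relation (the cubic `q`-Serre relation when `γ = ρ = 0`). -/
def tridiagonal {K R : Type*} [CommRing K] [Ring R] [Algebra K R] (β γ ρ : K) (A : R) :
    R →ₗ[K] R :=
  (LinearMap.mulLeft K A - LinearMap.mulRight K A) ∘ₗ askeyWilson β γ ρ A

variable {K R : Type*} [CommRing K] [Ring R] [Algebra K R]

theorem askeyWilson_apply (β γ ρ : K) (A X : R) :
    askeyWilson β γ ρ A X =
      A * A * X - β • (A * X * A) + X * A * A - γ • (A * X + X * A) - ρ • X :=
  rfl

theorem tridiagonal_apply (β γ ρ : K) (A X : R) :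
    tridiagonal β γ ρ A X = A * askeyWilson β γ ρ A X - askeyWilson β γ ρ A X * A :=
  rfl

theorem tridiagonal_eq_zero_of_askeyWilson_eq {β γ ρ ω η : K} {A X : R}
    (h : askeyWilson β γ ρ A X = ω • A + η • (1 : R)) : tridiagonal β γ ρ A X = 0 := by
  simp only [tridiagonal_apply, h, mul_add, add_mul, mul_smul_comm, smul_mul_assoc, mul_one,
    one_mul, sub_self]

theorem tridiagonal_one (β γ ρ : K) (A : R) : tridiagonal β γ ρ A 1 = 0 := by
  simp only [tridiagonal_apply, askeyWilson_apply, mul_one, one_mul, mul_add, add_mul, mul_sub,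
    sub_mul, mul_smul_comm, smul_mul_assoc, mul_assoc, sub_self]

theorem tridiagonal_smul_one_add (β γ ρ c : K) (A X : R) :
    tridiagonal β γ ρ A (c • (1 : R) + X) = tridiagonal β γ ρ A X := by
  rw [map_add, map_smul, tridiagonal_one, smul_zero, zero_add]

theorem tridiagonal_eq (β γ ρ : K) (A X : R) :
    tridiagonal β γ ρ A X = A * A * A * X - X * (A * A * A)
      - (β + 1) • (A * A * X * A - A * X * (A * A))
      - γ • (A * A * X - X * (A * A)) - ρ • (A * X - X * A) := by
  simp only [tridiagonal_apply, askeyWilson_apply, mul_add, add_mul, mul_sub, sub_mul,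
    mul_smul_comm, smul_mul_assoc, mul_assoc, add_smul, one_smul, smul_add, smul_sub]
  abel

theorem tridiagonal_eq_askeyWilson_commutator (β γ ρ : K) (A X : R) :
    tridiagonal β γ ρ A X = askeyWilson β γ ρ A (A * X - X * A) := by
  simp only [tridiagonal_apply, askeyWilson_apply, mul_add, add_mul, mul_sub, sub_mul,
    mul_smul_comm, smul_mul_assoc, mul_assoc, smul_add, smul_sub]
  abel

variable {n : Type*} [Fintype n] [DecidableEq n]

theorem trace_askeyWilson_mul (β γ ρ : K) (A X Y : Matrix n n K) :
    trace (askeyWilson β γ ρ A X * Y) = trace (X * askeyWilson β γ ρ A Y) := by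
  have hAX (Z : Matrix n n K) : trace (A * (X * Z)) = trace (X * (Z * A)) := by
    rw [trace_mul_comm, mul_assoc]
  simp only [askeyWilson_apply, mul_add, add_mul, mul_sub, sub_mul, smul_mul_assoc,
    mul_smul_comm, trace_add, trace_sub, trace_smul, smul_add, mul_assoc]
  rw [trace_mul_comm A (A * (X * Y))]
  simp only [mul_assoc, hAX]
  ring

theorem trace_tridiagonal_mul (β γ ρ : K) (A X Y : Matrix n n K) :
    trace (tridiagonal β γ ρ A X * Y) = -trace (X * tridiagonal β γ ρ A Y) := by
  set P := askeyWilson β γ ρ A X with hP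
  calc trace (tridiagonal β γ ρ A X * Y)
      = trace (P * (Y * A - A * Y)) := by
        rw [tridiagonal_apply, ← hP, sub_mul, mul_sub, trace_sub, trace_sub, mul_assoc A,
          trace_mul_comm A, mul_assoc P, mul_assoc P]
    _ = trace (X * askeyWilson β γ ρ A (Y * A - A * Y)) := trace_askeyWilson_mul ..
    _ = -trace (X * tridiagonal β γ ρ A Y) := by
        rw [tridiagonal_eq_askeyWilson_commutator, ← neg_sub (A * Y), map_neg, mul_neg, trace_neg]

theorem transpose_tridiagonal (β γ ρ : K) (A X : Matrix n n K) :
    (tridiagonal β γ ρ A X)ᵀ = -tridiagonal β γ ρ Aᵀ Xᵀ := by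
  simp only [tridiagonal_eq, transpose_sub, transpose_smul, transpose_mul, smul_sub, mul_assoc]
  abel

theorem tridiagonal_mulVec_intertwine {M : Type*} [AddCommGroup M] [Module K M] (β γ ρ : K)
    {A X : Matrix n n K} {B Y : Module.End K M} (S : M →ₗ[K] n → K)
    (hA : ∀ f, A *ᵥ S f = S (B f)) (hX : ∀ f, X *ᵥ S f = S (Y f)) (f : M) :
    tridiagonal β γ ρ A X *ᵥ S f = S (tridiagonal β γ ρ B Y f) := by
  simp only [tridiagonal_eq, sub_mulVec, smul_mulVec, ← mulVec_mulVec, hA, hX, LinearMap.sub_apply,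
    LinearMap.smul_apply, Module.End.mul_apply, map_sub, map_smul]

/- Summing the squared norms of `L (diagonal (E v))` over `v` and exchanging the sums turns the
total into `κ` times the sum of the diagonal entries in `hdiag`. -/
theorem skew_diagonal_eq_zero_of_mul_self_eq_smul {L : Matrix n n ℝ →ₗ[ℝ] Matrix n n ℝ}
    (htrace : ∀ X Y, trace (L X * Y) = -trace (X * L Y)) (htranspose : ∀ X, (L X)ᵀ = -L Xᵀ)
    {E : Matrix n n ℝ} {κ : ℝ} (hsymm : E.IsSymm) (hE : E * E = κ • E)
    (hdiag : ∀ y, L (L (diagonal (E y))) y y = 0) (v : n) : L (diagonal (E v)) = 0 := by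
  have hnorm (v : n) : trace ((L (diagonal (E v)))ᴴ * L (diagonal (E v))) =
      ∑ y, E v y * L (L (diagonal (E v))) y y := by
    rw [conjTranspose_eq_transpose_of_trivial, htranspose, diagonal_transpose, neg_mul, trace_neg,
      htrace, neg_neg, trace]
    simp only [diag_apply, diagonal_mul]
  have hrow (y : n) : ∑ v, E v y • diagonal (E v) = κ • diagonal (E y) := by
    ext i j
    obtain rfl | hij := eq_or_ne i j
    · simpa [Matrix.sum_apply, mul_apply, hsymm.apply] using congr_fun₂ hE y i
    · simp [Matrix.sum_apply, hij]
  have htotal : ∑ v, trace ((L (diagonal (E v)))ᴴ * L (diagonal (E v))) = 0 := by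
    simp only [hnorm]
    rw [Finset.sum_comm]
    refine Finset.sum_eq_zero fun y _ ↦ ?_
    calc ∑ v, E v y * L (L (diagonal (E v))) y y
        = L (L (∑ v, E v y • diagonal (E v))) y y := by
          simp only [map_sum, map_smul, Matrix.sum_apply, Matrix.smul_apply, smul_eq_mul]
      _ = 0 := by rw [hrow, map_smul, map_smul, Matrix.smul_apply, hdiag, smul_zero]
  rw [Finset.sum_eq_zero_iff_of_nonneg fun v _ ↦
    (posSemidef_conjTranspose_mul_self _).trace_nonneg] at htotal
  exact trace_conjTranspose_mul_self_eq_zero_iff.1 (htotal v (Finset.mem_univ v))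

end TridiagonalRelation

section RadialOperator

/-- The action of the adjacency matrix of a distance-regular graph with intersection numbers `b i`
and `c i` on the functions `w ↦ f (∂(y,w))`, written in terms of `f`. Since `a i = b 0 - b i - c i`,
it only involves differences of `f`; the truncated `i - 1` at `i = 0` is harmless. -/
def radialOp (b c : ℕ → ℝ) : Module.End ℝ (ℕ → ℝ) where
  toFun f i := b 0 * f i + b i * (f (i + 1) - f i) + c i * (f (i - 1) - f i)
  map_add' f g := by
    ext i
    simp only [Pi.add_apply]
    ring
  map_smul' r f := by
    ext i
    simp only [Pi.smul_apply, smul_eq_mul, RingHom.id_apply]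
    ring

theorem radialOp_apply (b c f : ℕ → ℝ) (i : ℕ) :
    radialOp b c f i = b 0 * f i + b i * (f (i + 1) - f i) + c i * (f (i - 1) - f i) :=
  rfl

theorem radialOp_one (b c : ℕ → ℝ) : radialOp b c 1 = b 0 • 1 := by
  ext i
  simp [radialOp_apply]

theorem radialOp_single_apply_of_lt (b c : ℕ → ℝ) (r : ℝ) {n i : ℕ} (h : n < i) :
    radialOp b c (Pi.single n r) i = c i * (Pi.single n r : ℕ → ℝ) (i - 1) := by
  rw [radialOp_apply, Pi.single_eq_of_ne h.ne', Pi.single_eq_of_ne (by omega : i + 1 ≠ n)]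
  ring

/-- The intersection number `b_i` of a graph with classical parameters `(D, b, α, β)`. -/
def classicalB (D : ℕ) (b α β : ℝ) (i : ℕ) : ℝ :=
  (gaussBracket b D - gaussBracket b i) * (β - α * gaussBracket b i)

/-- The intersection number `c_i` of a graph with classical parameters `(D, b, α, β)`. -/
def classicalC (b α : ℝ) (i : ℕ) : ℝ :=
  gaussBracket b i * (1 + α * gaussBracket b (i - 1))

/-- The intersection number `a_i = b_0 - b_i - c_i` of a graph with classical parameters
`(D, b, α, β)`. -/
def classicalA (D : ℕ) (b α β : ℝ) (i : ℕ) : ℝ :=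
  classicalB D b α β 0 - classicalB D b α β i - classicalC b α i

variable {b : ℝ}

theorem classicalB_diam (D : ℕ) (b α β : ℝ) : classicalB D b α β D = 0 := by
  rw [classicalB, sub_self, zero_mul]

theorem gaussBracket_zero (b : ℝ) : gaussBracket b 0 = 0 :=
  Finset.sum_range_zero _

theorem gaussBracket_succ (b : ℝ) (i : ℕ) : gaussBracket b (i + 1) = gaussBracket b i + b ^ i :=
  Finset.sum_range_succ _ _

theorem classicalA_succ (D : ℕ) (b α β : ℝ) (i : ℕ) :
    classicalA D b α β (i + 1) = gaussBracket b (i + 1) *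
      (β - 1 + α * (gaussBracket b D - gaussBracket b (i + 1) - gaussBracket b i)) := by
  rw [classicalA, classicalB, classicalB, classicalC, gaussBracket_zero, Nat.add_sub_cancel]
  ring

theorem classicalA_one (D : ℕ) (b α β : ℝ) :
    classicalA D b α β 1 = β - 1 + α * (gaussBracket b D - 1) := by
  rw [classicalA_succ, gaussBracket_succ, gaussBracket_zero, pow_zero]
  ring

theorem gaussBracket_eq_div (hb : b ≠ 1) (i : ℕ) : gaussBracket b i = (b ^ i - 1) / (b - 1) :=
  geom_sum_eq hb i

theorem radialOp_classical_inv_pow (D : ℕ) (α β : ℝ) (hb0 : b ≠ 0) (hb1 : b ≠ 1) :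
    radialOp (classicalB D b α β) (classicalC b α) (b⁻¹ ^ ·) =
      (b⁻¹ * classicalB D b α β 1 - 1) • (b⁻¹ ^ ·) +
        (b⁻¹ * classicalB D b α β 0 - (b⁻¹ * classicalB D b α β 1 - 1)) • 1 := by
  have hb1' : b - 1 ≠ 0 := sub_ne_zero.2 hb1
  ext i
  simp only [radialOp_apply, classicalB, classicalC, gaussBracket_eq_div hb1, Pi.add_apply,
    Pi.smul_apply, Pi.one_apply, smul_eq_mul]
  generalize (b ^ D - 1) / (b - 1) = N
  obtain _ | i := i
  · simp only [pow_zero, sub_self, zero_div, sub_zero, mul_zero, mul_one, zero_add, pow_one,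
      zero_tsub, add_zero, add_sub_cancel]
    ring
  · simp only [Nat.add_sub_cancel, pow_succ, inv_pow]
    have hX : b ^ i ≠ 0 := pow_ne_zero _ hb0
    generalize b ^ i = X at hX ⊢
    field_simp
    ring

theorem exists_askeyWilson_radialOp_classical (D : ℕ) (α β : ℝ) (hb0 : b ≠ 0) (hb1 : b ≠ 1) :
    ∃ ρ ω η : ℝ,
      askeyWilson (b + b⁻¹) (classicalA D b α β 1 * (1 - b⁻¹) + α * (1 + b⁻¹)) ρ
          (radialOp (classicalB D b α β) (classicalC b α)) (LinearMap.mulLeft ℝ (b⁻¹ ^ ·)) =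
        ω • radialOp (classicalB D b α β) (classicalC b α) + η • 1 := by
  have hb1' : b - 1 ≠ 0 := sub_ne_zero.2 hb1
  let q := b⁻¹
  let a₁ := classicalA D b α β 1
  let k := classicalB D b α β 0
  let ρ := k * b * (1 + q) ^ 2 - classicalB D b α β 1 * classicalC b α 2 * q * (1 + q)
    + q * a₁ ^ 2 - α * a₁ * (1 + q)
  refine ⟨ρ, a₁ * (q - 1) - α * (1 + q) ^ 2, k * (1 - q ^ 2) - ρ, ?_⟩
  ext1 f
  funext i
  simp only [ρ, k, a₁, q, askeyWilson_apply, LinearMap.sub_apply, LinearMap.add_apply,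
    LinearMap.smul_apply, Module.End.mul_apply, Module.End.one_apply, Pi.sub_apply, Pi.add_apply,
    Pi.smul_apply, Pi.mul_apply, smul_eq_mul, LinearMap.mulLeft_apply, radialOp_apply,
    classicalA_one, classicalB, classicalC, gaussBracket_eq_div hb1]
  generalize (b ^ D - 1) / (b - 1) = N
  obtain _ | _ | j := i
  · simp only [pow_zero, sub_self, zero_div, sub_zero, mul_zero, one_mul, zero_add, pow_one,
      zero_tsub, add_zero, mul_one, Nat.reduceAdd, inv_pow, tsub_self, Nat.add_one_sub_one]
    field_simp
    ring
  · simp only [pow_zero, sub_self, zero_div, sub_zero, mul_zero, zero_add, pow_one, Nat.reduceAdd,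
      inv_pow, tsub_self, add_zero, mul_one, one_mul, Nat.add_one_sub_one, zero_tsub]
    field_simp
    ring
  · simp only [Nat.add_sub_cancel, show j + 1 + 1 - 1 = j + 1 by omega,
      show j + 1 + 1 + 1 - 1 = j + 1 + 1 by omega, pow_succ, inv_pow]
    have hX : b ^ j ≠ 0 := pow_ne_zero _ hb0
    generalize b ^ j = X at hX ⊢
    field_simp
    ring

end RadialOperator

section DistanceRegular

theorem exists_adj_of_dist_eq_succ {G : SimpleGraph V} {x y : V} {n : ℕ}
    (h : G.dist x y = n + 1) : ∃ z, G.Adj z y ∧ G.dist x z = n := by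
  obtain ⟨w, hw⟩ := G.exists_walk_of_dist_ne_zero (u := y) (v := x) (by rw [G.dist_comm]; omega)
  cases w with
  | nil => simp at h
  | @cons _ z _ hadj w =>
    have hlen := G.dist_le w
    have hstep := hadj.symm.diff_dist_adj (u := x)
    rw [SimpleGraph.Walk.length_cons, G.dist_comm, h] at hw
    rw [G.dist_comm] at hlen
    exact ⟨z, hadj.symm, by omega⟩

theorem exists_dist_eq_of_le {G : SimpleGraph V} {x y : V} {i : ℕ} (hi : i ≤ G.dist x y) :
    ∃ z, G.dist x z = i := by
  induction hi using Nat.decreasingInduction with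
  | self => exact ⟨y, rfl⟩
  | of_succ i _ ih =>
    obtain ⟨z, hz⟩ := ih
    obtain ⟨w, -, hw⟩ := exists_adj_of_dist_eq_succ hz
    exact ⟨w, hw⟩

/-- `G` is distance-regular with intersection array `b₀, b₁, …; c₀, c₁, …`. The entries beyond the
diameter are unconstrained. -/
structure HasIntersectionArray (G : SimpleGraph V) (b c : ℕ → ℝ) : Prop where
  connected : G.Connected
  ncard_Bset : ∀ x y, ((Bset G x y).ncard : ℝ) = b (G.dist x y)
  ncard_Cset : ∀ x y, ((Cset G x y).ncard : ℝ) = c (G.dist x y)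

/-- The matrix with entries `f (∂(x,y))`, as a linear map of `f`. -/
noncomputable def distMatrix (G : SimpleGraph V) : (ℕ → ℝ) →ₗ[ℝ] Matrix V V ℝ where
  toFun f := Matrix.of fun x y ↦ f (G.dist x y)
  map_add' _ _ := rfl
  map_smul' _ _ := rfl

theorem distMatrix_apply (G : SimpleGraph V) (f : ℕ → ℝ) (x y : V) :
    distMatrix G f x y = f (G.dist x y) :=
  rfl

variable {G : SimpleGraph V}

theorem distMatrix_isSymm (f : ℕ → ℝ) : (distMatrix G f).IsSymm := by
  ext x y
  rw [transpose_apply, distMatrix_apply, distMatrix_apply, G.dist_comm]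

theorem HasIntersectionArray.c_pos [Finite V] {b c : ℕ → ℝ} (hG : HasIntersectionArray G b c)
    {x y : V} {n : ℕ} (h : n + 1 ≤ G.dist x y) : 0 < c (n + 1) := by
  obtain ⟨w, hw⟩ := exists_dist_eq_of_le h
  obtain ⟨z, hzw, hz⟩ := exists_adj_of_dist_eq_succ hw
  have hmem : z ∈ Cset G w x := by
    refine ⟨SimpleGraph.dist_eq_one_iff_adj.2 hzw.symm, ?_⟩
    rw [hz, G.dist_comm, hw, Nat.add_sub_cancel]
  rw [← hw, G.dist_comm, ← hG.ncard_Cset, Nat.cast_pos]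
  exact (Set.ncard_pos (Set.toFinite _)).2 ⟨z, hmem⟩

section AdjacencyMatrix

variable [Fintype V] [DecidableRel G.Adj]

theorem sum_neighborFinset_ite (x : V) (P : V → Prop) [DecidablePred P] (r : ℝ) :
    ∑ v ∈ G.neighborFinset x, (if P v then r else 0) = {v | G.dist x v = 1 ∧ P v}.ncard * r := by
  rw [← Finset.sum_filter, Finset.sum_const, nsmul_eq_mul, ← Set.ncard_coe_finset]
  simp only [Finset.coe_filter, SimpleGraph.mem_neighborFinset, SimpleGraph.dist_eq_one_iff_adj]

namespace HasIntersectionArray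

variable {b c : ℕ → ℝ} (hG : HasIntersectionArray G b c)
include hG

theorem adjMatrix_mulVec_comp_dist (f : ℕ → ℝ) (y : V) :
    G.adjMatrix ℝ *ᵥ (f ∘ G.dist y) = radialOp b c f ∘ G.dist y := by
  ext x
  set h := G.dist y x with hh
  have hsplit (v : V) (hv : v ∈ G.neighborFinset x) : f (G.dist y v) =
      (if G.dist x v = 0 + 1 then f h else 0) +
        (if G.dist y v = h + 1 then f (h + 1) - f h else 0) +
        (if G.dist y v = h - 1 then f (h - 1) - f h else 0) := by
    have hadj : G.Adj x v := (G.mem_neighborFinset x v).1 hv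
    rw [if_pos (SimpleGraph.dist_eq_one_iff_adj.2 hadj)]
    obtain hd | hd | hd := hadj.diff_dist_adj (u := y) <;> rw [hd, ← hh] <;>
      grind
  have hB₀ := hG.ncard_Bset x x
  have hB := hG.ncard_Bset x y
  have hC := hG.ncard_Cset x y
  simp only [Bset, Cset, G.dist_self, G.dist_comm (u := x) (v := y), ← hh] at hB₀ hB hC
  rw [G.adjMatrix_mulVec_apply, Function.comp_apply, ← hh, radialOp_apply, ← hB, ← hC, ← hB₀]
  simp only [Function.comp_apply]
  rw [Finset.sum_congr rfl hsplit, Finset.sum_add_distrib, Finset.sum_add_distrib,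
    sum_neighborFinset_ite, sum_neighborFinset_ite, sum_neighborFinset_ite]

theorem adjMatrix_mul_distMatrix (f : ℕ → ℝ) :
    G.adjMatrix ℝ * distMatrix G f = distMatrix G (radialOp b c f) := by
  ext x y
  rw [mul_apply, distMatrix_apply, G.dist_comm]
  refine Eq.trans (Finset.sum_congr rfl fun z _ ↦ ?_)
    (congr_fun (hG.adjMatrix_mulVec_comp_dist f y) x)
  rw [distMatrix_apply, G.dist_comm, Function.comp_apply]

theorem exists_distMatrix_mul_eq_smul {E : Matrix V V ℝ} {θ : ℝ}
    (hE : G.adjMatrix ℝ * E = θ • E) (f : ℕ → ℝ) (n : ℕ) (hf : ∀ i > n, f i = 0) :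
    ∃ κ : ℝ, distMatrix G f * E = κ • E := by
  classical
  induction n generalizing f with
  | zero =>
    refine ⟨f 0, ?_⟩
    have : distMatrix G f = f 0 • 1 := by
      ext x y
      obtain rfl | hxy := eq_or_ne x y
      · simp [distMatrix_apply]
      · simp [distMatrix_apply, hxy, hf _ (hG.connected.pos_dist_of_ne hxy)]
    rw [this, smul_one_mul]
  | succ n ih =>
    by_cases hc : c (n + 1) = 0
    · obtain ⟨κ, hκ⟩ := ih (Function.update f (n + 1) 0) fun i hi ↦ by
        obtain rfl | hne := eq_or_ne i (n + 1)
        · exact Function.update_self ..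
        · rw [Function.update_of_ne hne, hf i (by omega)]
      refine ⟨κ, ?_⟩
      convert hκ using 2
      ext x y
      exact (Function.update_of_ne (fun h ↦ (hG.c_pos h.ge).ne' hc) ..).symm
    · let g : ℕ → ℝ := Pi.single n (f (n + 1) / c (n + 1))
      obtain ⟨κ, hκ⟩ := ih g fun i hi ↦ Pi.single_eq_of_ne (by omega) _
      obtain ⟨κ', hκ'⟩ := ih (f - radialOp b c g) fun i hi ↦ by
        rw [Pi.sub_apply, radialOp_single_apply_of_lt b c _ hi]
        obtain rfl | hne := eq_or_ne i (n + 1)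
        · rw [Nat.add_sub_cancel, Pi.single_eq_same, mul_div_cancel₀ _ hc, sub_self]
        · rw [hf i (by omega), Pi.single_eq_of_ne (by omega), mul_zero, sub_self]
      refine ⟨κ * θ + κ', ?_⟩
      rw [map_sub, sub_mul, ← hG.adjMatrix_mul_distMatrix, mul_assoc, hκ, mul_smul_comm, hE,
        smul_smul, sub_eq_iff_eq_add] at hκ'
      rw [hκ', ← add_smul, add_comm]

omit [DecidableRel G.Adj] in
theorem exists_distMatrix_mul_self {ε : ℕ → ℝ} {θ : ℝ}
    (hε : radialOp b c ε = θ • ε) :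
    ∃ κ : ℝ, distMatrix G ε * distMatrix G ε = κ • distMatrix G ε := by
  classical
  have hE : G.adjMatrix ℝ * distMatrix G ε = θ • distMatrix G ε := by
    rw [hG.adjMatrix_mul_distMatrix, hε, map_smul]
  let N := Finset.univ.sup fun v : V × V ↦ G.dist v.1 v.2
  obtain ⟨κ, hκ⟩ := hG.exists_distMatrix_mul_eq_smul hE (fun i ↦ if i ≤ N then ε i else 0) N
    fun i hi ↦ if_neg hi.not_ge
  refine ⟨κ, ?_⟩
  convert hκ using 2
  ext x y
  exact (if_pos (Finset.le_sup (f := fun v : V × V ↦ G.dist v.1 v.2)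
    (Finset.mem_univ (x, y)))).symm

/- The operator `L` of the tridiagonal relation sends the diagonal matrix of `ε (∂(y,·))` to a
matrix that kills every function of `∂(y,·)`, in particular the indicator of `y`. -/
theorem tridiagonal_diagonal_eq_zero [DecidableEq V] {ε : ℕ → ℝ} {θ β γ ρ : ℝ}
    (hε : radialOp b c ε = θ • ε)
    (hB : tridiagonal β γ ρ (radialOp b c) (LinearMap.mulLeft ℝ ε) = 0) (v : V) :
    tridiagonal β γ ρ (G.adjMatrix ℝ) (diagonal (ε ∘ G.dist v)) = 0 := by
  obtain ⟨κ, hκ⟩ := hG.exists_distMatrix_mul_self hε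
  refine skew_diagonal_eq_zero_of_mul_self_eq_smul (trace_tridiagonal_mul β γ ρ (G.adjMatrix ℝ))
    (fun X ↦ ?_) (distMatrix_isSymm ε) hκ (fun y ↦ ?_) v
  · rw [transpose_tridiagonal, G.transpose_adjMatrix]
  · let S := LinearMap.funLeft ℝ ℝ (G.dist y)
    have hA (f : ℕ → ℝ) : G.adjMatrix ℝ *ᵥ S f = S (radialOp b c f) :=
      hG.adjMatrix_mulVec_comp_dist f y
    have hX (f : ℕ → ℝ) : diagonal (distMatrix G ε y) *ᵥ S f = S (LinearMap.mulLeft ℝ ε f) := by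
      ext x
      exact mulVec_diagonal _ _ x
    have hLX (f : ℕ → ℝ) : tridiagonal β γ ρ (G.adjMatrix ℝ) (diagonal (distMatrix G ε y)) *ᵥ S f =
        S ((0 : Module.End ℝ (ℕ → ℝ)) f) := by
      rw [tridiagonal_mulVec_intertwine β γ ρ S hA hX, hB]
    have hLLX := tridiagonal_mulVec_intertwine β γ ρ S hA hLX (Pi.single 0 1)
    have hS : S (Pi.single 0 1) = Pi.single y 1 := by
      ext x
      simp [S, LinearMap.funLeft_apply, Pi.single_apply, hG.connected.dist_eq_zero_iff, eq_comm]
    rw [hS, map_zero, LinearMap.zero_apply, map_zero] at hLLX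
    simpa using congr_fun hLLX y

/- A suitable constant turns `f` into an eigenvector of `radialOp b c`, and constants drop out of
the tridiagonal relation. -/
theorem tridiagonal_diagonal_eq_zero_of_eq_smul_add [DecidableEq V] {f : ℕ → ℝ} {θ τ β γ ρ : ℝ}
    (hf : radialOp b c f = θ • f + τ • 1) (hθ : θ ≠ b 0)
    (hB : tridiagonal β γ ρ (radialOp b c) (LinearMap.mulLeft ℝ f) = 0) (v : V) :
    tridiagonal β γ ρ (G.adjMatrix ℝ) (diagonal (f ∘ G.dist v)) = 0 := by
  have hθ' : θ - b 0 ≠ 0 := sub_ne_zero.2 hθ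
  let s := τ / (θ - b 0)
  have hε : radialOp b c (s • 1 + f) = θ • (s • 1 + f) := by
    rw [map_add, map_smul, radialOp_one, hf]
    ext i
    simp only [Pi.add_apply, Pi.smul_apply, Pi.one_apply, smul_eq_mul, s]
    field_simp
    ring
  have hmul : LinearMap.mulLeft ℝ (s • 1 + f) = s • 1 + LinearMap.mulLeft ℝ f := by
    ext1 g
    simp only [LinearMap.mulLeft_apply, add_mul, smul_one_mul, LinearMap.add_apply,
      LinearMap.smul_apply, Module.End.one_apply]
  have hdiag : diagonal ((s • 1 + f) ∘ G.dist v) =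
      s • (1 : Matrix V V ℝ) + diagonal (f ∘ G.dist v) := by
    rw [← diagonal_one, ← diagonal_smul, diagonal_add]
    rfl
  rw [← tridiagonal_smul_one_add _ _ _ s, ← hdiag]
  refine hG.tridiagonal_diagonal_eq_zero hε ?_ v
  rw [hmul, tridiagonal_smul_one_add, hB]

end HasIntersectionArray

end AdjacencyMatrix

theorem HasIntersectionArray.ncard_Aset [Finite V] {b c : ℕ → ℝ}
    (hG : HasIntersectionArray G b c) {x y : V} (hxy : x ≠ y) :
    ((Aset G x y).ncard : ℝ) = b 0 - b (G.dist x y) - c (G.dist x y) := by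
  classical
  cases nonempty_fintype V
  have hpos : 0 < G.dist y x := hG.connected.pos_dist_of_ne hxy.symm
  have hsum := congr_fun (hG.adjMatrix_mulVec_comp_dist (Pi.single (G.dist y x) 1) y) x
  simp only [G.adjMatrix_mulVec_apply, Function.comp_apply, Pi.single_apply,
    sum_neighborFinset_ite, mul_one, radialOp_apply, if_true] at hsum
  rw [if_neg (by omega), if_neg (by omega)] at hsum
  rw [Aset, G.dist_comm (u := x) (v := y), hsum]
  ring

end DistanceRegular

section ClassicalParameters

variable {G : SimpleGraph V} {D : ℕ} {b α β : ℝ}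

theorem HasClassicalParams.hasIntersectionArray {p : ℕ → ℕ → ℕ → ℕ}
    (hcp : HasClassicalParams D p b α β) (hdr : G.IsDistRegularWith D p) (hconn : G.Connected)
    (hD : 1 ≤ D) (hle : ∀ x y, G.dist x y ≤ D) :
    HasIntersectionArray G (classicalB D b α β) (classicalC b α) where
  connected := hconn
  ncard_Bset x y := by
    obtain hlt | heq := (hle x y).lt_or_eq
    · rw [Bset, hdr _ _ _ (hle x y) hD hlt x y rfl, hcp.2.2.2 _ (hle x y), classicalB]
    · have hempty : Bset G x y = ∅ :=
        Set.eq_empty_of_forall_notMem fun v hv ↦ by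
          have := hle y v
          have := hv.2
          omega
      rw [hempty, Set.ncard_empty, heq, classicalB_diam, Nat.cast_zero]
  ncard_Cset x y := by
    have hpred : G.dist x y - 1 ≤ D := (Nat.sub_le _ _).trans (hle x y)
    rw [Cset, hdr _ _ _ (hle x y) hD hpred x y rfl, hcp.2.2.1 _ (hle x y), classicalC]

theorem HasIntersectionArray.b_nonneg {b c : ℕ → ℝ} (hG : HasIntersectionArray G b c) {x y : V}
    {i : ℕ} (hi : i ≤ G.dist x y) : 0 ≤ b i := by
  obtain ⟨z, hz⟩ := exists_dist_eq_of_le hi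
  rw [← hz, ← hG.ncard_Bset]
  positivity

theorem HasIntersectionArray.cast_eq_classicalA [Finite V] {p : ℕ → ℕ → ℕ → ℕ}
    (hG : HasIntersectionArray G (classicalB D b α β) (classicalC b α))
    (hdr : G.IsDistRegularWith D p) {x y : V} {i : ℕ} (hi : 0 < i) (hiD : i ≤ D)
    (hxy : i ≤ G.dist x y) : p i 1 i = classicalA D b α β i := by
  obtain ⟨z, hz⟩ := exists_dist_eq_of_le hxy
  have hA := hG.ncard_Aset (x := x) (y := z) (by rintro rfl; simp at hz; omega)
  rwa [Aset, hz, hdr i 1 i hiD (hi.trans_le hiD) hiD x z hz] at hA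

variable [Fintype V] [DecidableEq V] [DecidableRel G.Adj]
  (hG : HasIntersectionArray G (classicalB D b α β) (classicalC b α))
include hG

theorem HasIntersectionArray.exists_tridiagonal_diagonal_inv_pow [Nontrivial V] (hb : b < 0) :
    ∃ ρ : ℝ, ∀ v, tridiagonal (b + b⁻¹) (classicalA D b α β 1 * (1 - b⁻¹) + α * (1 + b⁻¹)) ρ
      (G.adjMatrix ℝ) (diagonal fun w ↦ b⁻¹ ^ G.dist v w) = 0 := by
  have hb1 : b ≠ 1 := by linarith
  obtain ⟨x, y, hxy⟩ := exists_pair_ne V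
  have hk₀ : 0 ≤ classicalB D b α β 0 := hG.b_nonneg (G.dist x y).zero_le
  have hk₁ : 0 ≤ classicalB D b α β 1 := hG.b_nonneg (hG.connected.pos_dist_of_ne hxy)
  have hθ : b⁻¹ * classicalB D b α β 1 - 1 ≠ classicalB D b α β 0 := by
    have := mul_nonpos_of_nonpos_of_nonneg (inv_nonpos.2 hb.le) hk₁
    linarith
  obtain ⟨ρ, ω, η, hAW⟩ := exists_askeyWilson_radialOp_classical D α β hb.ne hb1
  exact ⟨ρ, hG.tridiagonal_diagonal_eq_zero_of_eq_smul_add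
    (radialOp_classical_inv_pow D α β hb.ne hb1) hθ (tridiagonal_eq_zero_of_askeyWilson_eq hAW)⟩

end ClassicalParameters

section BalancedSet

variable [Fintype V] {G : SimpleGraph V} [DecidableRel G.Adj] {b c : ℕ → ℝ}
  (hG : HasIntersectionArray G b c)
include hG

theorem HasIntersectionArray.adjMatrix_mul_self_apply (ha₁ : b 0 - b 1 - c 1 = 0) {x y : V}
    (hxy : x ≠ y) :
    (G.adjMatrix ℝ * G.adjMatrix ℝ) x y = if G.dist x y = 2 then c 2 else 0 := by
  have hA : G.adjMatrix ℝ = distMatrix G (Pi.single 1 1) := by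
    ext x y
    rw [G.adjMatrix_apply, distMatrix_apply, Pi.single_apply]
    simp only [SimpleGraph.dist_eq_one_iff_adj]
  have hpos := hG.connected.pos_dist_of_ne hxy
  nth_rw 2 [hA]
  rw [hG.adjMatrix_mul_distMatrix, distMatrix_apply]
  generalize G.dist x y = h at hpos
  obtain _ | _ | _ | h := h
  · omega
  · rw [zero_add, radialOp_apply, Pi.single_eq_same, Pi.single_eq_of_ne (by norm_num),
      Pi.single_eq_of_ne (by norm_num), if_neg (by norm_num)]
    linarith
  · rw [radialOp_single_apply_of_lt _ _ _ (by norm_num), if_pos rfl]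
    simp
  · rw [radialOp_single_apply_of_lt _ _ _ (by omega), if_neg (by omega),
      Pi.single_eq_of_ne (by omega), mul_zero]

theorem HasIntersectionArray.adjMatrix_mul_self_mul_diagonal_mul_apply [DecidableEq V]
    (ha₁ : b 0 - b 1 - c 1 = 0) (Q : V → ℝ) {y z : V} (hyz : 2 ≤ G.dist y z) :
    (G.adjMatrix ℝ * G.adjMatrix ℝ * diagonal Q * G.adjMatrix ℝ) y z =
      c 2 * ∑ w ∈ G.neighborFinset z with G.dist y w = 2, Q w := by
  rw [G.mul_adjMatrix_apply, Finset.sum_filter, Finset.mul_sum]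
  refine Finset.sum_congr rfl fun w hw ↦ ?_
  have hzw : G.dist z w = 1 := SimpleGraph.dist_eq_one_iff_adj.2 ((G.mem_neighborFinset z w).1 hw)
  have hyw : y ≠ w := by
    rintro rfl
    rw [G.dist_comm] at hzw
    omega
  rw [mul_diagonal, hG.adjMatrix_mul_self_apply ha₁ hyw, ite_mul, zero_mul, mul_ite, mul_zero]

theorem HasIntersectionArray.card_filter_neighborFinset {y z : V} (hyz : G.dist y z = 2) :
    (((G.neighborFinset z).filter (G.dist y · = 2)).card : ℝ) = b 0 - b 2 - c 2 := by
  have hzy : z ≠ y := by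
    rintro rfl
    simp at hyz
  have hA := hG.ncard_Aset hzy
  rw [G.dist_comm, hyz] at hA
  rw [← hA, Aset, G.dist_comm, hyz, ← mul_one (Set.ncard _ : ℝ), ← sum_neighborFinset_ite,
    ← Finset.sum_filter, Finset.sum_const, nsmul_eq_mul, mul_one]

/- This is the `(y, z)` entry of the tridiagonal relation. -/
theorem HasIntersectionArray.balanced_of_tridiagonal_eq_zero [DecidableEq V]
    (ha₁ : b 0 - b 1 - c 1 = 0) {β γ ρ : ℝ} {Q : V → ℝ}
    (hQ : tridiagonal β γ ρ (G.adjMatrix ℝ) (diagonal Q) = 0) {y z : V} (hyz : G.dist y z = 2) :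
    (β + 1) * (∑ w ∈ G.neighborFinset z with G.dist y w = 2, Q w -
        ∑ w ∈ G.neighborFinset y with G.dist z w = 2, Q w) =
      (b 0 - b 2 - c 2 - γ) * (Q z - Q y) := by
  set A := G.adjMatrix ℝ with hA
  have hzy : G.dist z y = 2 := by rw [G.dist_comm, hyz]
  have hne : y ≠ z := by
    rintro rfl
    simp at hyz
  have hentry := congr_fun₂ hQ y z
  have hA₁ : A y z = 0 := by
    rw [hA, G.adjMatrix_apply, if_neg fun h ↦ ?_]
    simp [SimpleGraph.dist_eq_one_iff_adj.2 h] at hyz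
  have hA₂ : (A * A) y z = c 2 := by
    rw [hG.adjMatrix_mul_self_apply ha₁ hne, if_pos hyz]
  have hA₃ : (A * A * A) y z = c 2 * (b 0 - b 2 - c 2) := by
    have h := hG.adjMatrix_mul_self_mul_diagonal_mul_apply ha₁ (fun _ ↦ 1) hyz.ge
    rwa [diagonal_one, mul_one, Finset.sum_const, nsmul_eq_mul, mul_one,
      hG.card_filter_neighborFinset hyz] at h
  have hAQ : (A * A * diagonal Q * A) y z =
      c 2 * ∑ w ∈ G.neighborFinset z with G.dist y w = 2, Q w :=
    hG.adjMatrix_mul_self_mul_diagonal_mul_apply ha₁ Q hyz.ge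
  have hQA : (A * diagonal Q * (A * A)) y z =
      c 2 * ∑ w ∈ G.neighborFinset y with G.dist z w = 2, Q w := by
    rw [← hG.adjMatrix_mul_self_mul_diagonal_mul_apply ha₁ Q hzy.ge, ← hA,
      ← transpose_apply (A * diagonal Q * (A * A))]
    simp only [transpose_mul, diagonal_transpose, hA, G.transpose_adjMatrix, mul_assoc]
  have hc₂ : c 2 ≠ 0 := (hG.c_pos hyz.ge).ne'
  simp only [tridiagonal_eq, Matrix.sub_apply, Matrix.smul_apply, mul_diagonal, diagonal_mul,
    hA₁, hA₂, hA₃, hAQ, hQA, smul_eq_mul, Matrix.zero_apply] at hentry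
  refine mul_left_cancel₀ hc₂ ?_
  linear_combination -hentry

end BalancedSet

section NegativeBase

theorem gaussBracket_two (b : ℝ) : gaussBracket b 2 = 1 + b := by
  rw [gaussBracket_succ, gaussBracket_succ, gaussBracket_zero]
  ring

theorem gaussBracket_three (b : ℝ) : gaussBracket b 3 = 1 + b + b ^ 2 := by
  rw [gaussBracket_succ, gaussBracket_two]

variable {D : ℕ} {b α β : ℝ}

theorem classicalA_two_of_one_eq_zero (ha₁ : classicalA D b α β 1 = 0) :
    classicalA D b α β 2 = -α * (1 + b) ^ 2 := by
  rw [classicalA_one] at ha₁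
  rw [classicalA_succ, gaussBracket_two, gaussBracket_succ, gaussBracket_zero]
  linear_combination (1 + b) * ha₁

theorem classicalA_three_of_one_eq_zero (ha₁ : classicalA D b α β 1 = 0) :
    classicalA D b α β 3 = -α * (1 + b + b ^ 2) * (1 + b) ^ 2 := by
  rw [classicalA_one] at ha₁
  rw [classicalA_succ, gaussBracket_three, gaussBracket_two]
  linear_combination (1 + b + b ^ 2) * ha₁

theorem classicalA_two_lt_two (hb : 0 < b) (ha₁ : classicalA D b α β 1 = 0)
    (hc₄ : 0 < classicalC b α 4) : classicalA D b α β 2 < 2 := by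
  have h₄ : 0 ≤ gaussBracket b 4 := Finset.sum_nonneg fun k _ ↦ pow_nonneg hb.le k
  have hα : 0 < 1 + α * (1 + b + b ^ 2) := by
    rw [← gaussBracket_three]
    exact (pos_iff_pos_of_mul_pos hc₄).1 (h₄.lt_of_ne' (left_ne_zero_of_mul hc₄.ne'))
  rw [classicalA_two_of_one_eq_zero ha₁]
  nlinarith [sq_nonneg (1 - b)]

/- If `a₂ = 1` then `m = a₃ - c₃ + c₂ + 1` equals `2 (1 + b)` and satisfies `m (m - 2 c₂) = 4`. -/
theorem classicalA_two_ne_one (hb : 0 < b) (ha₁ : classicalA D b α β 1 = 0) {a₃ c₂ c₃ : ℕ}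
    (ha₃ : a₃ = classicalA D b α β 3) (hc₂ : c₂ = classicalC b α 2)
    (hc₃ : c₃ = classicalC b α 3) : classicalA D b α β 2 ≠ 1 := by
  intro ha₂
  rw [classicalA_two_of_one_eq_zero ha₁] at ha₂
  rw [classicalA_three_of_one_eq_zero ha₁] at ha₃
  rw [classicalC, gaussBracket_two, gaussBracket_succ, gaussBracket_zero] at hc₂
  rw [classicalC, gaussBracket_three, gaussBracket_two] at hc₃
  let m : ℤ := a₃ - c₃ + c₂ + 1
  have hm : (m : ℝ) = 2 * (1 + b) := by
    push_cast [m]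
    linear_combination ha₃ - hc₃ + hc₂ + (1 + 2 * b + b ^ 2) * ha₂
  have hmul : m * (m - 2 * c₂) = 4 := by
    have : (m : ℝ) * (m - 2 * c₂) = 4 := by
      rw [hm, hc₂]
      linear_combination 4 * ha₂
    exact_mod_cast this
  have hm₂ : 2 < m := by
    have : (2 : ℝ) < m := by linarith
    exact_mod_cast this
  have hm₄ : m = 4 := by
    have hle : m ≤ 4 := Int.le_of_dvd (by norm_num) ⟨_, hmul.symm⟩
    obtain hm₄ | hm₃ : m = 4 ∨ m = 3 := by omega
    · exact hm₄
    · rw [hm₃] at hmul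
      omega
  rw [hm₄] at hmul
  omega

theorem HasIntersectionArray.b_neg [Finite V] {G : SimpleGraph V}
    (hG : HasIntersectionArray G (classicalB D b α β) (classicalC b α))
    (ha₁ : classicalA D b α β 1 = 0) (ha₂ : classicalA D b α β 2 ≠ 0) (hb0 : b ≠ 0) {x y : V}
    (hxy : 4 ≤ G.dist x y) : b < 0 := by
  by_contra! hb
  have hb : 0 < b := hb.lt_of_ne' hb0
  obtain ⟨y₃, hy₃⟩ := exists_dist_eq_of_le (show 3 ≤ G.dist x y by omega)
  obtain ⟨y₂, hy₂⟩ := exists_dist_eq_of_le (show 2 ≤ G.dist x y by omega)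
  have hA₃ := hG.ncard_Aset (x := x) (y := y₃) (by rintro rfl; simp at hy₃)
  have hA₂ := hG.ncard_Aset (x := x) (y := y₂) (by rintro rfl; simp at hy₂)
  have hC₃ := hG.ncard_Cset x y₃
  have hC₂ := hG.ncard_Cset x y₂
  rw [hy₃] at hA₃ hC₃
  rw [hy₂] at hA₂ hC₂
  have hlt := classicalA_two_lt_two hb ha₁ (hG.c_pos hxy)
  refine classicalA_two_ne_one hb ha₁ hA₃ hC₂ hC₃ ?_
  rw [← classicalA] at hA₂
  rw [← hA₂] at hlt ha₂ ⊢
  norm_cast at hlt ha₂ ⊢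
  omega

end NegativeBase

section Monotone

/-- If `y` lies at distance `2` from `z` on a geodesic from `v` to `z`, then `A(z,y) ⊆ A(z,v)`. -/
def AsetMonotone (G : SimpleGraph V) : Prop :=
  ∀ ⦃v y z : V⦄, G.dist y z = 2 → G.dist v z = G.dist v y + 2 → Aset G z y ⊆ Aset G z v

theorem AsetMonotone.dist_eq {G : SimpleGraph V} (hG : AsetMonotone G) {v y z w : V}
    (hyz : G.dist y z = 2) (hvz : G.dist v z = G.dist v y + 2) (hzw : G.dist z w = 1)
    (hyw : G.dist y w = 2) : G.dist v w = G.dist v z := by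
  have hmem : w ∈ Aset G z y := ⟨hzw, by rw [hyw, G.dist_comm, hyz]⟩
  rw [(hG hyz hvz hmem).2, G.dist_comm]

theorem sum_pow_dist_eq (G : SimpleGraph V) (q : ℝ) (v : V) {s : Finset V} {m : ℕ}
    (hs : ∀ w ∈ s, G.dist v w = m ∨ G.dist v w = m + 1) :
    ∑ w ∈ s, q ^ G.dist v w =
      s.card * q ^ (m + 1) + (s.filter (G.dist v · = m)).card * (q ^ m - q ^ (m + 1)) := by
  have hsplit (w : V) (hw : w ∈ s) : q ^ G.dist v w =
      q ^ (m + 1) + if G.dist v w = m then q ^ m - q ^ (m + 1) else 0 := by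
    obtain h | h := hs w hw <;> simp [h]
  rw [Finset.sum_congr rfl hsplit, Finset.sum_add_distrib, ← Finset.sum_filter, Finset.sum_const,
    Finset.sum_const, nsmul_eq_mul, nsmul_eq_mul]

theorem inv_mul_eq_of_balanced {b α M N : ℝ} (hb : b < 0) (n : ℕ)
    (h : (b + b⁻¹ + 1) *
        (-α * (1 + b) ^ 2 * b⁻¹ ^ (n + 2) + M * (b⁻¹ ^ (n + 1) - b⁻¹ ^ (n + 2)) -
          (-α * (1 + b) ^ 2 * b⁻¹ ^ (n + 1) + N * (b⁻¹ ^ n - b⁻¹ ^ (n + 1)))) =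
      (-α * (1 + b) ^ 2 - α * (1 + b⁻¹)) * (b⁻¹ ^ (n + 2) - b⁻¹ ^ n)) : b⁻¹ * M = N := by
  set q := b⁻¹
  have hbq : b * q = 1 := mul_inv_cancel₀ hb.ne
  have hq₀ : q < 0 := inv_lt_zero.2 hb
  have hfactor : (b + q + 1) * (1 - q) * q ^ n ≠ 0 := by
    have hsum : b + q + 1 ≠ 0 := fun h0 ↦ by nlinarith [sq_nonneg (b + q), sq_nonneg (b - q)]
    have hsub : 1 - q ≠ 0 := by linarith
    exact mul_ne_zero (mul_ne_zero hsum hsub) (pow_ne_zero n hq₀.ne)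
  have hzero : (b + q + 1) * (1 - q) * q ^ n * (q * M - N) = 0 := by
    linear_combination
      h - q ^ n * (1 - q) * α * ((1 + b) ^ 2 + 2 * (1 + b) * q - (b * q - 1)) * hbq
  exact sub_eq_zero.1 ((mul_eq_zero.1 hzero).resolve_left hfactor)

/- On `A(z,y)` the function `b⁻¹ ^ ∂(v,·)` takes the values `b⁻¹ ^ (n + 2)` and `b⁻¹ ^ (n + 1)`, the
latter exactly where `A(z,y) ⊆ A(z,v)` fails; on `A(y,z)` it takes the values `b⁻¹ ^ (n + 1)` and
`b⁻¹ ^ n`. The balanced set identity makes the number of exceptions `N` in `A(y,z)` equal to `b⁻¹`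
times the number `M` of those in `A(z,y)`, so both vanish. -/
theorem HasIntersectionArray.asetMonotone [Finite V] {G : SimpleGraph V} {D : ℕ} {b α β : ℝ}
    (hG : HasIntersectionArray G (classicalB D b α β) (classicalC b α)) (hb : b < 0)
    (ha₁ : classicalA D b α β 1 = 0) : AsetMonotone G := by
  classical
  cases nonempty_fintype V
  intro v y z hyz hvz u hu
  set n := G.dist v y with hn
  have htri {x y z : V} : G.dist x z ≤ G.dist x y + G.dist y z := hG.connected.dist_triangle
  have hzy : G.dist z y = 2 := by rw [G.dist_comm, hyz]
  have : Nontrivial V := ⟨y, z, by rintro rfl; simp at hyz⟩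
  obtain ⟨ρ, hρ⟩ := hG.exists_tridiagonal_diagonal_inv_pow hb
  have hz_values (w : V) (hw : w ∈ (G.neighborFinset z).filter (G.dist y · = 2)) :
      G.dist v w = n + 1 ∨ G.dist v w = n + 1 + 1 := by
    obtain ⟨hzw, hyw⟩ := Finset.mem_filter.1 hw
    have := ((G.mem_neighborFinset z w).1 hzw).diff_dist_adj (u := v)
    have := htri (x := v) (y := y) (z := w)
    omega
  have hy_values (w : V) (hw : w ∈ (G.neighborFinset y).filter (G.dist z · = 2)) :
      G.dist v w = n ∨ G.dist v w = n + 1 := by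
    obtain ⟨hyw, hzw⟩ := Finset.mem_filter.1 hw
    have := ((G.mem_neighborFinset y w).1 hyw).diff_dist_adj (u := v)
    have := htri (x := v) (y := w) (z := z)
    rw [G.dist_comm] at hzw
    omega
  have hbal := hG.balanced_of_tridiagonal_eq_zero ha₁ (hρ v) hyz
  rw [sum_pow_dist_eq G b⁻¹ v hz_values, sum_pow_dist_eq G b⁻¹ v hy_values,
    hG.card_filter_neighborFinset hyz, hG.card_filter_neighborFinset hzy, ← hn, hvz, ← classicalA,
    ha₁, classicalA_two_of_one_eq_zero ha₁, zero_mul, zero_add] at hbal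
  have hMN := inv_mul_eq_of_balanced hb n hbal
  have hu_mem : u ∈ (G.neighborFinset z).filter (G.dist y · = 2) := by
    rw [Finset.mem_filter, G.mem_neighborFinset, ← SimpleGraph.dist_eq_one_iff_adj]
    exact ⟨hu.1, hu.2.trans hzy⟩
  refine ⟨hu.1, ?_⟩
  rw [G.dist_comm (u := z), hvz]
  refine (hz_values u hu_mem).resolve_left fun hu_exc ↦ hMN.not_lt ?_
  have hM : 0 < (((G.neighborFinset z).filter (G.dist y · = 2)).filter
      (G.dist v · = n + 1)).card := Finset.card_pos.2 ⟨u, Finset.mem_filter.2 ⟨hu_mem, hu_exc⟩⟩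
  exact (mul_neg_of_neg_of_pos (inv_lt_zero.2 hb) (Nat.cast_pos.2 hM)).trans_le (Nat.cast_nonneg _)

end Monotone

section Pentagon

theorem HasIntersectionArray.cliqueFree_three [Finite V] {G : SimpleGraph V} {b c : ℕ → ℝ}
    (hG : HasIntersectionArray G b c) (ha₁ : b 0 - b 1 - c 1 = 0) : G.CliqueFree 3 := by
  classical
  intro T hT
  obtain ⟨x, y, z, hxy, hxz, hyz, -⟩ := SimpleGraph.is3Clique_iff.1 hT
  have hA := hG.ncard_Aset hxy.ne
  rw [SimpleGraph.dist_eq_one_iff_adj.2 hxy, ha₁, Nat.cast_eq_zero,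
    Set.ncard_eq_zero (Set.toFinite _)] at hA
  refine Set.eq_empty_iff_forall_notMem.1 hA z ⟨SimpleGraph.dist_eq_one_iff_adj.2 hxz, ?_⟩
  rw [SimpleGraph.dist_eq_one_iff_adj.2 hxy, SimpleGraph.dist_eq_one_iff_adj.2 hyz]

theorem dist_eq_two_of_cliqueFree_three {G : SimpleGraph V} (hG : G.CliqueFree 3) {x y z : V}
    (hxy : G.dist x y = 1) (hyz : G.dist y z = 1) (hxz : x ≠ z) : G.dist x z = 2 := by
  classical
  rw [SimpleGraph.dist_eq_one_iff_adj] at hxy hyz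
  have hle : G.dist x z ≤ 2 := G.dist_le (.cons hxy (.cons hyz .nil))
  have hpos : 0 < G.dist x z := (hxy.reachable.trans hyz.reachable).pos_dist_of_ne hxz
  have hone : G.dist x z ≠ 1 := fun h ↦ hG {x, y, z} <|
    SimpleGraph.is3Clique_triple_iff.2 ⟨hxy, SimpleGraph.dist_eq_one_iff_adj.1 h, hyz⟩
  omega

variable {G : SimpleGraph V} [Finite V] {b c : ℕ → ℝ}

/- Otherwise every common neighbour of `r` and `s` would be one of `r` and `z`. There are `c₂` of
each, but `u` is only one of the latter. -/
theorem HasIntersectionArray.exists_common_neighbor_dist_eq_two (hG : HasIntersectionArray G b c)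
    (hmono : AsetMonotone G) {r s z u : V} (hrs : G.dist r s = 2) (hrz : G.dist r z = 2)
    (hsz : G.dist s z = 2) (hru : G.dist r u = 1) (hzu : G.dist z u = 1) (hsu : G.dist s u = 2) :
    ∃ y, G.dist r y = 1 ∧ G.dist y s = 1 ∧ G.dist z y = 2 := by
  by_contra! hcon
  have hsub : Cset G r s ⊆ Cset G r z := by
    rintro y ⟨hry, hsy⟩
    rw [hrs] at hsy
    have hys : G.dist y s = 1 := by rwa [G.dist_comm]
    refine ⟨hry, ?_⟩
    have hyz_ne_three : G.dist y z ≠ 3 := fun hyz ↦ by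
      have hyu : G.dist y u = 3 := (hmono.dist_eq hsz (by omega) hzu hsu).trans hyz
      have hur : G.dist u r = 1 := by rwa [G.dist_comm]
      have hsr : G.dist s r = 2 := by rwa [G.dist_comm]
      have hyr : G.dist y r = 3 := (hmono.dist_eq hsu (by omega) hur hsr).trans hyu
      rw [G.dist_comm] at hyr
      omega
    have hzy_ne_two := hcon y hry hys
    have hstep := (SimpleGraph.dist_eq_one_iff_adj.1 hsy).diff_dist_adj (u := z)
    rw [G.dist_comm (u := y)] at hyz_ne_three
    rw [G.dist_comm (u := z) (v := s)] at hstep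
    omega
  have hcard : (Cset G r s).ncard = (Cset G r z).ncard := by
    rw [← Nat.cast_inj (R := ℝ), hG.ncard_Cset, hG.ncard_Cset, hrs, hrz]
  have hu : u ∈ Cset G r s := by
    rw [Set.eq_of_subset_of_ncard_le hsub hcard.ge (Set.toFinite _)]
    exact ⟨hru, by rw [hzu, hrz]⟩
  have := hu.2
  omega

theorem HasIntersectionArray.pentagon_dist_eq_three (hG : HasIntersectionArray G b c)
    (hmono : AsetMonotone G) (hfree : G.CliqueFree 3) {x s t u z w r : V} {n : ℕ}
    (hst : G.dist s t = 1) (htu : G.dist t u = 1) (huz : G.dist u z = 1)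
    (hzw : G.dist z w = 1) (hws : G.dist w s = 1)
    (hs : G.dist x s = n + 1) (hz : G.dist x z = n) (hur : G.dist u r = 1)
    (hr : G.dist x r = n + 2) : G.dist s r = 3 := by
  have hru : G.dist r u = 1 := by rwa [G.dist_comm]
  have hzu : G.dist z u = 1 := by rwa [G.dist_comm]
  have hsw : G.dist s w = 1 := by rwa [G.dist_comm]
  have hwz : G.dist w z = 1 := by rwa [G.dist_comm]
  have hsz : G.dist s z = 2 :=
    dist_eq_two_of_cliqueFree_three hfree hsw hwz (by rintro rfl; omega)
  have hzs : G.dist z s = 2 := by rwa [G.dist_comm]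
  have hsu : G.dist s u = 2 :=
    dist_eq_two_of_cliqueFree_three hfree hst htu (by rintro rfl; omega)
  have hrz : G.dist r z = 2 :=
    dist_eq_two_of_cliqueFree_three hfree hru huz (by rintro rfl; omega)
  have hzr : G.dist z r = 2 := by rwa [G.dist_comm]
  have hfar {y y' : V} (hzy : G.dist z y = 2) (hxy : G.dist x y = n + 2)
      (hyy' : G.dist y y' = 1) (hzy' : G.dist z y' = 2) : G.dist x y' = n + 2 :=
    (hmono.dist_eq hzy (by omega) hyy' hzy').trans hxy
  have hrs_ne_one : G.dist r s ≠ 1 := fun hrs ↦ by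
    have := hfar hzr hr hrs hzs
    omega
  have hrs_ne_two : G.dist r s ≠ 2 := fun hrs ↦ by
    obtain ⟨y, hry, hys, hzy⟩ :=
      hG.exists_common_neighbor_dist_eq_two hmono hrs hrz hsz hru hzu hsu
    have := hfar hzy (hfar hzr hr hry hzy) hys hzs
    omega
  have hsr_le : G.dist s r ≤ G.dist s u + G.dist u r := hG.connected.dist_triangle
  have hxr_le : G.dist x r ≤ G.dist x s + G.dist s r := hG.connected.dist_triangle
  rw [G.dist_comm] at hrs_ne_one hrs_ne_two
  omega

end Pentagon

theorem pentagon_Bset_dist_eq_three_general [Finite V] (G : SimpleGraph V) (hconn : G.Connected)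
    (D : ℕ) (hD : 4 ≤ D)
    (hdiam_le : ∀ x y : V, G.dist x y ≤ D) (hdiam : ∃ x y : V, G.dist x y = D)
    (p : ℕ → ℕ → ℕ → ℕ) (hdr : G.IsDistRegularWith D p)
    (b α β : ℝ) (hcp : HasClassicalParams D p b α β)
    (ha1 : p 1 1 1 = 0) (ha2 : p 2 1 2 ≠ 0)
    (n : ℕ) (x s t u z w : V)
    (hst : G.dist s t = 1) (htu : G.dist t u = 1) (huz : G.dist u z = 1)
    (hzw : G.dist z w = 1) (hws : G.dist w s = 1)
    (hs : G.dist x s = n + 1) (hu : G.dist x u = n + 1) (hz : G.dist x z = n) :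
    ∀ r ∈ Bset G u x, G.dist s r = 3 := by
  obtain ⟨x₀, y₀, hxy₀⟩ := hdiam
  have hxy₄ : 4 ≤ G.dist x₀ y₀ := hD.trans hxy₀.ge
  have hG := hcp.hasIntersectionArray hdr hconn (by omega) hdiam_le
  have ha (i : ℕ) (hi : 0 < i) (hi' : i ≤ D) : p i 1 i = classicalA D b α β i :=
    hG.cast_eq_classicalA hdr hi hi' (hi'.trans hxy₀.ge)
  have ha₁ : classicalA D b α β 1 = 0 := by rw [← ha 1 one_pos (by omega), ha1, Nat.cast_zero]
  have ha₂ : classicalA D b α β 2 ≠ 0 := by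
    rw [← ha 2 two_pos (by omega)]
    exact Nat.cast_ne_zero.2 ha2
  have hmono := hG.asetMonotone (hG.b_neg ha₁ ha₂ hcp.1 hxy₄) ha₁
  rintro r ⟨hur, hxr⟩
  rw [G.dist_comm (u := u), hu] at hxr
  exact hG.pentagon_dist_eq_three hmono (hG.cliqueFree_three ha₁) hst htu huz hzw hws hs hz hur hxr

/-- Classical parameters `(D, b, α, β)`, `D ≥ 4`, `a₁ = 0`, `a₂ ≠ 0`.
If `s t u z w` is a pentagon with `s, u ∈ Γ₃(x)` and `z ∈ Γ₂(x)`, then every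
`r ∈ B(u,x)` (i.e. every neighbor `r` of `u` with `∂(x,r) = 4`) satisfies `∂(s,r) = 3`. -/
theorem pentagon_Bset_dist_eq_three [Fintype V] (G : SimpleGraph V) (hconn : G.Connected)
    (D : ℕ) (hD : 4 ≤ D)
    (hdiam_le : ∀ x y : V, G.dist x y ≤ D) (hdiam : ∃ x y : V, G.dist x y = D)
    (p : ℕ → ℕ → ℕ → ℕ) (hdr : G.IsDistRegularWith D p)
    (b α β : ℝ) (hcp : HasClassicalParams D p b α β)
    (ha1 : p 1 1 1 = 0) (ha2 : p 2 1 2 ≠ 0)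
    (x s t u z w : V)
    (hst : G.dist s t = 1) (htu : G.dist t u = 1) (huz : G.dist u z = 1)
    (hzw : G.dist z w = 1) (hws : G.dist w s = 1)
    (hs : G.dist x s = 3) (hu : G.dist x u = 3) (hz : G.dist x z = 2) :
    ∀ r ∈ Bset G u x, G.dist s r = 3 :=
  pentagon_Bset_dist_eq_three_general G hconn D hD hdiam_le hdiam p hdr b α β hcp ha1 ha2 2
    x s t u z w hst htu huz hzw hws hs hu hz
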